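/- arXiv:1406.3062 — 5 statements merged into one kernel-verified Lean document; each statement's English description precedes it below -/
import Mathlib

section
/- Assume CH. Let I be a σ-ideal on ℝ satisfying the standing assumptions (ℝ ∉ I, translation invariance, scale invariance, Borel base, Steinhaus property). Then there exists an I-Luzin set L ⊆ ℝ such that L + L = ℝ. -/
open Cardinal MeasureTheory Set
open scoped Pointwise

/-- `I` is a σ-ideal on `ℝ`. -/
def IsSigmaIdeal (I : Set (Set ℝ)) : Prop :=
  ∅ ∈ I ∧ (∀ A B : Set ℝ, A ⊆ B → B ∈ I → A ∈ I) ∧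
    ∀ f : ℕ → Set ℝ, (∀ n, f n ∈ I) → (⋃ n, f n) ∈ I

/-- The standing assumptions on the σ-ideal `I`: nontriviality, translation and scale
invariance, Borel base and the Steinhaus property. -/
def StandingIdeal (I : Set (Set ℝ)) : Prop :=
  IsSigmaIdeal I ∧
  Set.univ ∉ I ∧
  (∀ x : ℝ, ∀ S ∈ I, (fun y => x + y) '' S ∈ I) ∧
  (∀ x : ℝ, ∀ S ∈ I, (fun y => x * y) '' S ∈ I) ∧
  (∀ S ∈ I, ∃ B ∈ I, MeasurableSet B ∧ S ⊆ B) ∧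
  (∀ A B : Set ℝ, MeasurableSet A → MeasurableSet B → A ∉ I → B ∉ I →
    (interior (A - B)).Nonempty)

/-- `L` is an `I`-Luzin set. -/
def IsLuzinFor (I : Set (Set ℝ)) (L : Set ℝ) : Prop :=
  Cardinal.mk L = Cardinal.continuum ∧ ∀ S ∈ I, (L ∩ S).Countable

/-- `L` is a strong `I`-Luzin set. -/
def IsStrongLuzinFor (I : Set (Set ℝ)) (L : Set ℝ) : Prop :=
  IsLuzinFor I L ∧ ∀ B : Set ℝ, MeasurableSet B → B ∉ I → ¬ (L ∩ B).Countable

/-- `L` is a Luzin set. -/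
def IsLuzin (L : Set ℝ) : Prop :=
  Cardinal.mk L = Cardinal.continuum ∧ ∀ M : Set ℝ, IsMeagre M → (L ∩ M).Countable

/-- `L` is a strong Luzin set. -/
def IsStrongLuzin (L : Set ℝ) : Prop :=
  IsLuzin L ∧ ∀ B : Set ℝ, MeasurableSet B → ¬ IsMeagre B → ¬ (L ∩ B).Countable

/-- `S` is a Sierpiński set. -/
def IsSierpinski (S : Set ℝ) : Prop :=
  Cardinal.mk S = Cardinal.continuum ∧ ∀ N : Set ℝ, volume N = 0 → (S ∩ N).Countable

/-- `S` is a strong Sierpiński set. -/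
def IsStrongSierpinski (S : Set ℝ) : Prop :=
  IsSierpinski S ∧ ∀ B : Set ℝ, MeasurableSet B → 0 < volume B → ¬ (S ∩ B).Countable

/-- `X` is a Bernstein set. -/
def IsBernstein (X : Set ℝ) : Prop :=
  ∀ P : Set ℝ, Perfect P → P.Nonempty → (P ∩ X).Nonempty ∧ (P ∩ Xᶜ).Nonempty

/-- `A ⊆ ℝ²` is completely `𝓜`-nonmeasurable. -/
def CompletelyMeagerNonmeasurable (A : Set (ℝ × ℝ)) : Prop :=
  ∀ B : Set (ℝ × ℝ), MeasurableSet B → ¬ IsMeagre B → (A ∩ B).Nonempty ∧ ¬ B ⊆ A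

/-- `A ⊆ ℝ²` is completely `𝓝`-nonmeasurable. -/
def CompletelyNullNonmeasurable (A : Set (ℝ × ℝ)) : Prop :=
  ∀ B : Set (ℝ × ℝ), MeasurableSet B → 0 < volume B → (A ∩ B).Nonempty ∧ ¬ B ⊆ A

/-- `n`-fold Minkowski sum (with `nFoldSum A 0 = {0}`). -/
def nFoldSum (A : Set ℝ) : ℕ → Set ℝ
  | 0 => {0}
  | n + 1 => nFoldSum A n + A

/-!
The proof is a transfinite diagonalization. Under CH the elements of `ℝ` and a Borel base of `I` can
both be indexed by `ω₁`. At stage `x` only countably many members of the base have appeared, so some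
`a` lies outside all of them together with `x - a`, because the reflection `a ↦ x - a` preserves
`I`. The numbers chosen along the way form `L`: a member of the base only meets what was chosen
before it appeared, and `x = a + (x - a)` gives `L + L = ℝ`. With a regular cardinal `κ` in place of
`ℵ₁`, the same recursion works in any group of cardinality `κ`.
-/

open Filter

universe u v

section Cardinal

variable {κ : Cardinal.{u}}

/-- For `κ = ℵ₁` this is Sierpiński's decomposition of a product into two sets, one with countable
vertical and one with countable horizontal sections. -/
theorem exists_rel_mk_sections_lt (hκ : ℵ₀ ≤ κ) {X ι : Type u} (hX : #X ≤ κ) (hι : #ι ≤ κ) :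
    ∃ T : X → ι → Prop, (∀ x, #{i | T x i} < κ) ∧ ∀ i, #{x | ¬ T x i} < κ := by
  have rank {Y : Type u} (hY : #Y ≤ κ) : Nonempty (Y ↪ κ.ord.ToType) := by
    rwa [← Cardinal.le_def, mk_ord_toType]
  obtain ⟨rankX⟩ := rank hX
  obtain ⟨rankι⟩ := rank hι
  have mk_Iic (o : κ.ord.ToType) : #(Iic o) < κ := by
    simpa using mk_Iic_lt o (by simp) (by simpa using hκ)
  refine ⟨fun x i => rankι i ≤ rankX x, fun x => ?_, fun i => ?_⟩
  · exact (mk_preimage_of_injective rankι (Iic (rankX x)) rankι.injective).trans_lt (mk_Iic _)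
  · refine (mk_le_mk_of_subset fun x hx => ?_).trans_lt <|
      (mk_preimage_of_injective rankX (Iic (rankι i)) rankX.injective).trans_lt (mk_Iic _)
    exact (not_le.1 hx).le

theorem exists_tendsto_cocardinal_of_frequently (hκ : κ.IsRegular) {X α ι : Type u} (hX : #X ≤ κ)
    {l : Filter α} [CardinalInterFilter l κ] {p : ι → Prop} {s : ι → Set α} (hl : l.HasBasis p s)
    (hp : #{i | p i} ≤ κ) {r : X → α → Prop} (hr : ∀ x, ∃ᶠ a in l, r x a) :
    ∃ f : X → α, (∀ x, r x (f x)) ∧ Tendsto f (cocardinal X hκ) l := by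
  obtain ⟨T, hT, hT'⟩ := exists_rel_mk_sections_lt hκ.aleph0_le hX hp
  have eventually_mem (x : X) : ∀ᶠ a in l, ∀ i ∈ {i | T x i}, a ∈ s i :=
    (eventually_cardinal_ball (hT x)).2 fun i _ => hl.mem_of_mem i.2
  choose f hrf hfs using fun x => ((hr x).and_eventually (eventually_mem x)).exists
  refine ⟨f, hrf, hl.tendsto_right_iff.2 fun i hi => ?_⟩
  exact mem_of_superset (eventually_cocardinal_notMem_of_card_lt (hT' ⟨i, hi⟩))
    fun x hx => hfs x ⟨i, hi⟩ (not_not.1 hx)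

theorem mk_range_diff_lt_of_tendsto_cocardinal (hκ : κ.IsRegular) {X α : Type u} {l : Filter α}
    {f : X → α} (hf : Tendsto f (cocardinal X hκ) l) {S : Set α} (hS : S ∈ l) :
    #(range f \ S : Set α) < κ := by
  have subset_image : range f \ S ⊆ f '' (f ⁻¹' S)ᶜ := by
    rintro _ ⟨⟨x, rfl⟩, hx⟩
    exact mem_image_of_mem f hx
  exact (mk_le_mk_of_subset subset_image).trans_lt (mk_image_le.trans_lt (hf hS))

theorem le_mk_of_add_self_eq_univ (hκ : ℵ₀ ≤ κ) {G : Type u} [Add G] (hG : κ ≤ #G) {L : Set G}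
    (hL : L + L = Set.univ) : κ ≤ #L := by
  by_contra! hlt
  refine (hG.trans ?_).not_gt (mul_lt_of_lt hκ hlt hlt)
  simpa only [hL, mk_univ] using mk_add_le (s := L) (t := L)

/-- Here `l` is the filter dual to the ideal, so `L \ S` is the trace of `L` on the member `Sᶜ` of
the ideal. -/
theorem stmt_12_general (hκ : κ.IsRegular) {G ι : Type u} [AddGroup G] (hG : #G = κ)
    {l : Filter G} [l.NeBot] [CardinalInterFilter l κ] {p : ι → Prop} {s : ι → Set G}
    (hl : l.HasBasis p s) (hp : #{i | p i} ≤ κ) (hneg : ∀ x, Tendsto (fun a => -a + x) l l) :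
    ∃ L : Set G, (#L = κ ∧ ∀ S ∈ l, #(L \ S : Set G) < κ) ∧ L + L = Set.univ := by
  have : CardinalInterFilter (l ×ˢ l) κ := by
    rw [prod_eq_inf]; infer_instance
  have frequently_add_eq (x : G) : ∃ᶠ a in l ×ˢ l, a.1 + a.2 = x :=
    (tendsto_id.prodMk (hneg x)).frequently (.of_forall fun a => add_neg_cancel_left a x)
  obtain ⟨f, hadd, hf⟩ :=
    exists_tendsto_cocardinal_of_frequently hκ hG.le hl.prod_self hp frequently_add_eq
  let L : Set G := range (fun x => (f x).1) ∪ range fun x => (f x).2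
  have hL : L + L = Set.univ := eq_univ_of_forall fun x =>
    ⟨(f x).1, .inl ⟨x, rfl⟩, (f x).2, .inr ⟨x, rfl⟩, hadd x⟩
  refine ⟨L, ⟨?_, fun S hS => ?_⟩, hL⟩
  · exact ((mk_set_le L).trans hG.le).antisymm (le_mk_of_add_self_eq_univ hκ.aleph0_le hG.ge hL)
  · rw [union_sdiff_distrib]
    exact (mk_union_le _ _).trans_lt <| add_lt_of_lt hκ.aleph0_le
      (mk_range_diff_lt_of_tendsto_cocardinal hκ (tendsto_fst.comp hf) hS)
      (mk_range_diff_lt_of_tendsto_cocardinal hκ (tendsto_snd.comp hf) hS)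

end Cardinal

theorem continuum_eq_aleph_one_of_universe (h : continuum.{v} = ℵ₁) : continuum.{u} = ℵ₁ :=
  lift_injective.{v, u} (by simpa using congrArg lift.{u, v} h)

theorem mk_setOf_measurableSet_le_continuum (α : Type u) [MeasurableSpace α]
    [MeasurableSpace.CountablyGenerated α] : #{s : Set α | MeasurableSet s} ≤ 𝔠 := by
  rw [← MeasurableSpace.generateFrom_countableGeneratingSet (α := α)]
  exact MeasurableSpace.cardinal_measurableSet_le_continuum <|
    MeasurableSpace.countable_countableGeneratingSet.le_aleph0.trans aleph0_le_continuum

namespace IsSigmaIdeal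

variable {I : Set (Set ℝ)}

theorem mem_of_subset (hI : IsSigmaIdeal I) {A B : Set ℝ} (hAB : A ⊆ B) (hB : B ∈ I) : A ∈ I :=
  hI.2.1 A B hAB hB

theorem sUnion_mem (hI : IsSigmaIdeal I) {C : Set (Set ℝ)} (hC : C.Countable) (hCI : C ⊆ I) :
    ⋃₀ C ∈ I := by
  obtain ⟨hempty, -, hunion⟩ := hI
  obtain rfl | hne := C.eq_empty_or_nonempty
  · rwa [sUnion_empty]
  · obtain ⟨f, rfl⟩ := hC.exists_eq_range hne
    rw [sUnion_range]
    exact hunion f fun n => hCI (mem_range_self n)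

/-- The filter of complements of members of the σ-ideal `I`. -/
def dualFilter (hI : IsSigmaIdeal I) : Filter ℝ :=
  .ofCountableUnion I (fun _ => hI.sUnion_mem) fun _ ht _ hst => hI.mem_of_subset hst ht

theorem mem_dualFilter (hI : IsSigmaIdeal I) {S : Set ℝ} : S ∈ hI.dualFilter ↔ Sᶜ ∈ I :=
  Iff.rfl

instance (hI : IsSigmaIdeal I) : CountableInterFilter hI.dualFilter :=
  countableInter_ofCountableUnion ..

theorem neBot_dualFilter (hI : IsSigmaIdeal I) (huniv : Set.univ ∉ I) : hI.dualFilter.NeBot := by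
  rwa [neBot_iff, ne_eq, ← empty_mem_iff_bot, mem_dualFilter, compl_empty]

theorem hasBasis_dualFilter (hI : IsSigmaIdeal I)
    (hbase : ∀ S ∈ I, ∃ B ∈ I, MeasurableSet B ∧ S ⊆ B) :
    hI.dualFilter.HasBasis (fun B => MeasurableSet B ∧ B ∈ I) compl := by
  refine ⟨fun S => ⟨fun hS => ?_, fun ⟨B, ⟨_, hB⟩, hBS⟩ => ?_⟩⟩
  · obtain ⟨B, hB, hBm, hSB⟩ := hbase _ hS
    exact ⟨B, ⟨hBm, hB⟩, compl_subset_comm.1 hSB⟩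
  · exact hI.mem_of_subset (compl_subset_comm.1 hBS) hB

theorem tendsto_neg_add_dualFilter (hI : IsSigmaIdeal I)
    (htrans : ∀ x : ℝ, ∀ S ∈ I, (fun y => x + y) '' S ∈ I)
    (hneg : ∀ S ∈ I, (fun y => -1 * y) '' S ∈ I) (x : ℝ) :
    Tendsto (fun a => -a + x) hI.dualFilter hI.dualFilter := by
  intro S hS
  refine hI.mem_of_subset (fun a ha => ?_) (htrans x _ (hneg _ hS))
  exact ⟨-1 * (-a + x), mem_image_of_mem _ ha, by ring⟩

theorem isLuzinFor_of_mk_diff_lt (hI : IsSigmaIdeal I) {L : Set ℝ} (hL : #L = 𝔠)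
    (hdiff : ∀ S ∈ hI.dualFilter, #(L \ S : Set ℝ) < ℵ₁) : IsLuzinFor I L := by
  refine ⟨hL, fun S hS => ?_⟩
  rw [← le_aleph0_iff_set_countable, ← lt_aleph_one_iff, ← sdiff_compl]
  exact hdiff Sᶜ (hI.mem_dualFilter.2 (by rwa [compl_compl]))

end IsSigmaIdeal

theorem stmt_12 (hCH : Cardinal.continuum = Cardinal.aleph 1)
    (I : Set (Set ℝ)) (hI : StandingIdeal I) :
    ∃ L : Set ℝ, IsLuzinFor I L ∧ L + L = Set.univ := by
  obtain ⟨hσ, hproper, htrans, hscale, hBorel, -⟩ := hI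
  have continuum_eq : 𝔠 = ℵ₁ := continuum_eq_aleph_one_of_universe hCH
  have := hσ.neBot_dualFilter hproper
  have mk_base_le : #{B | MeasurableSet B ∧ B ∈ I} ≤ ℵ₁ :=
    (mk_le_mk_of_subset fun _ hB => hB.1).trans <|
      (mk_setOf_measurableSet_le_continuum ℝ).trans continuum_eq.le
  obtain ⟨L, ⟨hcard, hdiff⟩, hL⟩ :=
    stmt_12_general isRegular_aleph_one (mk_real.trans continuum_eq)
      (hσ.hasBasis_dualFilter hBorel) mk_base_le
      (hσ.tendsto_neg_add_dualFilter htrans (hscale (-1)))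
  exact ⟨L, hσ.isLuzinFor_of_mk_diff_lt (hcard.trans continuum_eq.symm) hdiff, hL⟩
end

section
/- Assume CH. Then there exists a Luzin set L ⊆ ℝ such that the Minkowski sum L + L is a Bernstein set. -/
open Cardinal MeasureTheory Set
open scoped Pointwise

/-! Under CH the Borel sets can be enumerated along a well-order of type `ω₁`, and `L` is built
along it, two elements per stage. A stage handles an uncountable Borel set `P` and avoids all small
Borel sets enumerated so far, so each small set meets `L` only in elements from a countable initial
segment of the stages. Only countably many values have been forbidden as sums, so some `p ∈ P` is
not forbidden; put `a` and `p - a` into `L`. For generic `a` the new sums avoid the forbidden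
values, since each of them is `p` or the sum or difference of a constant and one of `a`, `2a`.
Finally forbid an element of `P` that is not one of the countably many sums so far. -/

open Filter

section Cardinality

universe u v

theorem continuum_eq_aleph_one_of_univ (h : (𝔠 : Cardinal.{v}) = ℵ₁) :
    (𝔠 : Cardinal.{u}) = ℵ₁ := by
  apply lift_injective.{v}
  simpa using congrArg lift.{u} h

theorem exists_range_eq_of_mk_le {ι α : Type u} {s : Set α} (hs : s.Nonempty) (h : #s ≤ #ι) :
    ∃ f : ι → α, range f = s := by
  have := hs.to_subtype
  obtain ⟨e⟩ := h
  refine ⟨Subtype.val ∘ Function.invFun e, ?_⟩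
  rw [(Function.invFun_surjective e.injective).range_comp, Subtype.range_coe]

theorem mk_iUnion_eq_aleph_one {ι α : Type u} {C : ι → Set α} (hι : #ι = ℵ₁)
    (hC : ∀ i, (C i).Countable) (hunion : ¬ (⋃ i, C i).Countable) : #(⋃ i, C i) = ℵ₁ := by
  refine le_antisymm ?_ ?_
  · calc
      #(⋃ i, C i) ≤ #ι * ⨆ i, #(C i) := mk_iUnion_le C
      _ ≤ ℵ₁ * ℵ₀ := mul_le_mul' hι.le (ciSup_le' fun i => (hC i).le_aleph0)
      _ = ℵ₁ := mul_aleph0_eq (aleph0_le_aleph 1)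
  · rwa [← succ_aleph0, Order.succ_le_iff, ← not_le, le_aleph0_iff_set_countable]

theorem countable_Iio_toType_ord_aleph_one (i : (ℵ₁ : Cardinal.{u}).ord.ToType) :
    (Iio i).Countable := by
  rw [← le_aleph0_iff_set_countable, ← Order.lt_succ_iff, succ_aleph0]
  simpa using mk_Iio_lt i (by simp)

theorem mk_measurableSet_le_continuum {α : Type u} [MeasurableSpace α]
    [MeasurableSpace.CountablyGenerated α] : #{s : Set α | MeasurableSet s} ≤ 𝔠 := by
  obtain ⟨b, hb, rfl⟩ := MeasurableSpace.CountablyGenerated.isCountablyGenerated (α := α)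
  exact MeasurableSpace.cardinal_measurableSet_le_continuum
    (hb.le_aleph0.trans aleph0_le_continuum)

end Cardinality

section WellOrder

theorem exists_forall_image_Iio {ι T : Type*} [Preorder ι] [WellFoundedLT ι]
    {R : ι → Set T → T → Prop} (h : ∀ i S, ∃ t, R i S t) :
    ∃ F : ι → T, ∀ i, R i (F '' Iio i) (F i) := by
  choose G hG using h
  let F : ι → T := wellFounded_lt.fix fun i rec => G i (range fun j : Iio i => rec j j.2)
  have hF (i : ι) : F i = G i (F '' Iio i) := by
    rw [image_eq_range]
    exact wellFounded_lt.fix_eq _ i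
  exact ⟨F, fun i => hF i ▸ hG i (F '' Iio i)⟩

theorem countable_iUnion_inter_of_disjoint {ι α : Type*} [LinearOrder ι] {C N : ι → Set α}
    (hC : ∀ i, (C i).Countable) {k : ι} (hk : (Iio k).Countable)
    (hdisj : ∀ i, k ≤ i → Disjoint (C i) (N k)) : ((⋃ i, C i) ∩ N k).Countable := by
  refine (hk.biUnion fun i _ => hC i).mono ?_
  rintro x ⟨hx, hxN⟩
  obtain ⟨i, hxi⟩ := mem_iUnion.1 hx
  exact mem_biUnion (not_le.1 fun hki => (hdisj i hki).le_bot ⟨hxi, hxN⟩) hxi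

end WellOrder

section FilterCofinite

variable {α : Type*} {l : Filter α} [CountableInterFilter l]

theorem compl_mem_of_countable (hl : l ≤ cofinite) {s : Set α} (hs : s.Countable) : sᶜ ∈ l := by
  rw [← biUnion_of_singleton s, compl_iUnion₂]
  exact (countable_bInter_mem hs).2 fun x _ => le_cofinite_iff_compl_singleton_mem.1 hl x

theorem not_countable_univ_of_le_cofinite [NeBot l] (hl : l ≤ cofinite) :
    ¬ (univ : Set α).Countable := fun h =>
  empty_notMem l (by simpa using compl_mem_of_countable hl h)

end FilterCofinite

theorem le_cofinite_of_tendsto {α β : Type*} {l : Filter α} {f : α → β}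
    (hf : Tendsto f l cofinite) : l ≤ cofinite :=
  le_cofinite_iff_eventually_ne.2 fun x =>
    (hf.eventually (eventually_cofinite_ne (f x))).mono fun _ => ne_of_apply_ne f

/-- The outcome of one stage of the construction of `L`: the elements `left` and `right` are put
into `L`, and the value `avoided` is to be kept out of `L + L`. -/
structure Stage (G : Type*) where
  left : G
  right : G
  avoided : G

namespace Stage

variable {G : Type*}

/-- The elements that a stage puts into `L`. -/
def summands (s : Stage G) : Set G := {s.left, s.right}

/-- The part of `L` built by the stages in `S`. -/
def allSummands (S : Set (Stage G)) : Set G := ⋃ s ∈ S, s.summands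

theorem countable_summands (s : Stage G) : s.summands.Countable :=
  (toFinite {s.left, s.right}).countable

theorem countable_allSummands {S : Set (Stage G)} (hS : S.Countable) :
    (allSummands S).Countable :=
  hS.biUnion fun s _ => s.countable_summands

theorem summands_subset_union_allSummands_image_Iio {ι : Type*} [PartialOrder ι]
    (F : ι → Stage G) {i k : ι} (hik : i ≤ k) :
    (F i).summands ⊆ (F k).summands ∪ allSummands (F '' Iio k) := by
  rcases hik.eq_or_lt with rfl | hlt
  · exact subset_union_left
  · have hsub : (F i).summands ⊆ allSummands (F '' Iio k) :=
      subset_biUnion_of_mem (u := summands) (mem_image_of_mem F hlt)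
    exact subset_union_of_subset_right hsub _

variable [AddCommGroup G]

/-- The stage `s` is a correct continuation of the previous stages `S`, where the small set `N` is
to be avoided by `L`, and the set `P` is to meet both `L + L` and its complement. -/
structure Extends (s : Stage G) (S : Set (Stage G)) (N P : Set G) : Prop where
  disjoint_summands : Disjoint s.summands N
  left_add_right_mem : s.left + s.right ∈ P
  avoided_mem : s.avoided ∈ P
  avoided_notMem : s.avoided ∉ (s.summands ∪ allSummands S) + (s.summands ∪ allSummands S)
  disjoint_add : Disjoint (s.summands + (s.summands ∪ allSummands S)) (avoided '' S)

theorem left_add_right_mem_iUnion_add_iUnion {ι : Type*} (F : ι → Stage G) (k : ι) :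
    (F k).left + (F k).right ∈ (⋃ i, (F i).summands) + ⋃ i, (F i).summands :=
  add_mem_add (mem_iUnion_of_mem k (mem_insert _ _))
    (mem_iUnion_of_mem k (mem_insert_of_mem _ rfl))

section Extends

variable {ι : Type*} [LinearOrder ι] {F : ι → Stage G} {N P : ι → Set G}

theorem avoided_notMem_iUnion_add_iUnion (hF : ∀ i, (F i).Extends (F '' Iio i) (N i) (P i))
    (k : ι) : (F k).avoided ∉ (⋃ i, (F i).summands) + ⋃ i, (F i).summands := by
  suffices avoided_ne : ∀ i j, i ≤ j → ∀ x ∈ (F i).summands, ∀ y ∈ (F j).summands,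
      y + x ≠ (F k).avoided by
    rintro ⟨x, hx, y, hy, hxy⟩
    obtain ⟨i, hx⟩ := mem_iUnion.1 hx
    obtain ⟨j, hy⟩ := mem_iUnion.1 hy
    rcases le_total i j with hij | hji
    · exact avoided_ne i j hij x hx y hy ((add_comm y x).trans hxy)
    · exact avoided_ne j i hji y hy x hx hxy
  intro i j hij x hx y hy hyx
  rcases le_or_gt j k with hjk | hkj
  · refine (hF k).avoided_notMem ⟨y, ?_, x, ?_, hyx⟩
    · exact summands_subset_union_allSummands_image_Iio F hjk hy
    · exact summands_subset_union_allSummands_image_Iio F (hij.trans hjk) hx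
  · refine disjoint_left.1 (hF j).disjoint_add ⟨y, hy, x, ?_, hyx⟩
      (mem_image_of_mem avoided (mem_image_of_mem F hkj))
    exact summands_subset_union_allSummands_image_Iio F hij hx

end Extends

section Filter

variable {l : Filter G} [CountableInterFilter l]

theorem eventually_notMem_of_tendsto_add_self {N A Q : Set G}
    (hdouble : Tendsto (fun x : G => x + x) l cofinite)
    (hN : Nᶜ ∈ l) (hA : A.Countable) (hQ : Q.Countable) :
    ∀ᶠ a in l, a ∉ N ∧ a + a ∉ Q ∧ ∀ y ∈ A, a + y ∉ Q := by
  have hl : l ≤ cofinite := le_cofinite_of_tendsto hdouble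
  have hdoubleQ : ∀ᶠ a in l, a + a ∉ Q := compl_mem_of_countable hdouble hQ
  have htranslate : ∀ᶠ a in l, a ∉ Q - A := compl_mem_of_countable hl (hQ.image2 hA (· - ·))
  filter_upwards [hN, hdoubleQ, htranslate] with a haN haQ ha
  exact ⟨haN, haQ, fun y hy hay => ha ⟨a + y, hay, y, hy, add_sub_cancel_right a y⟩⟩

theorem exists_extends [NeBot l] (hsub : ∀ p : G, Tendsto (p - ·) l l)
    (hdouble : Tendsto (fun x : G => x + x) l cofinite) {S : Set (Stage G)} (hS : S.Countable)
    {N P : Set G} (hN : Nᶜ ∈ l) (hP : ¬ P.Countable) : ∃ s : Stage G, s.Extends S N P := by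
  have exists_mem_notMem {C : Set G} (hC : C.Countable) : ∃ p ∈ P, p ∉ C :=
    not_subset.1 fun h => hP (hC.mono h)
  obtain ⟨p, hpP, hpS⟩ := exists_mem_notMem (hS.image avoided)
  have hgeneric := eventually_notMem_of_tendsto_add_self hdouble hN (countable_allSummands hS)
    (hS.image avoided)
  obtain ⟨a, ⟨haN, haa, ha⟩, hbN, hbb, hb⟩ :=
    (hgeneric.and ((hsub p).eventually hgeneric)).exists
  let A := {a, p - a} ∪ allSummands S
  have hA : A.Countable := (toFinite {a, p - a}).countable.union (countable_allSummands hS)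
  obtain ⟨q, hqP, hqA⟩ := exists_mem_notMem (hA.image2 hA (· + ·))
  have hab : a + (p - a) = p := add_sub_cancel a p
  have hba : p - a + a = p := sub_add_cancel p a
  refine ⟨⟨a, p - a, q⟩, ?_, ?_, hqP, hqA, ?_⟩
  · exact disjoint_left.2 (by rintro x (rfl | rfl) <;> assumption)
  · simpa only [hab] using hpP
  · rw [disjoint_left]
    rintro _ ⟨x, rfl | rfl, y, (rfl | rfl) | hy, rfl⟩
    · exact haa
    · simpa only [hab] using hpS
    · exact ha y hy
    · simpa only [hba] using hpS
    · exact hbb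
    · exact hb y hy

theorem exists_forall_extends [NeBot l] {ι : Type*} [LinearOrder ι] [WellFoundedLT ι]
    (hcount : ∀ i : ι, (Iio i).Countable) (hsub : ∀ p : G, Tendsto (p - ·) l l)
    (hdouble : Tendsto (fun x : G => x + x) l cofinite) {N P : ι → Set G}
    (hN : ∀ i, (N i)ᶜ ∈ l) (hP : ∀ i, ¬ (P i).Countable) :
    ∃ F : ι → Stage G, ∀ i, (F i).Extends (F '' Iio i) (⋃ j ∈ Iic i, N j) (P i) := by
  have hNunion (i : ι) : (⋃ j ∈ Iic i, N j)ᶜ ∈ l := by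
    have hIic : (Iic i).Countable := by
      rw [← Iio_insert]
      exact (hcount i).insert i
    rw [compl_iUnion₂]
    exact (countable_bInter_mem hIic).2 fun j _ => hN j
  have hstep (i : ι) (S : Set (Stage G)) :
      ∃ s : Stage G, S.Countable → s.Extends S (⋃ j ∈ Iic i, N j) (P i) := by
    by_cases hS : S.Countable
    · obtain ⟨s, hs⟩ := exists_extends hsub hdouble hS (hNunion i) (hP i)
      exact ⟨s, fun _ => hs⟩
    · exact ⟨⟨0, 0, 0⟩, fun h => absurd h hS⟩
  obtain ⟨F, hF⟩ := exists_forall_image_Iio hstep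
  exact ⟨F, fun i => hF i ((hcount i).image F)⟩

end Filter

end Stage

section Enumeration

universe u

variable {ι G : Type u} [MeasurableSpace G]

theorem exists_range_eq_setOf_measurableSet_and {p : Set G → Prop}
    (hι : #{s : Set G | MeasurableSet s} ≤ #ι) (hp : ∃ s, MeasurableSet s ∧ p s) :
    ∃ f : ι → Set G, range f = {s | MeasurableSet s ∧ p s} :=
  exists_range_eq_of_mk_le hp ((mk_le_mk_of_subset fun _ hs => hs.1).trans hι)

theorem exists_forall_compl_mem_exists_superset {l : Filter G} [l.IsMeasurablyGenerated]
    (hι : #{s : Set G | MeasurableSet s} ≤ #ι) :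
    ∃ N : ι → Set G, (∀ i, (N i)ᶜ ∈ l) ∧ ∀ M, Mᶜ ∈ l → ∃ i, M ⊆ N i := by
  obtain ⟨N, hN⟩ := exists_range_eq_setOf_measurableSet_and (p := (·ᶜ ∈ l)) hι
    ⟨∅, MeasurableSet.empty, by simp⟩
  refine ⟨N, fun i => (hN.subset (mem_range_self i)).2, fun M hM => ?_⟩
  obtain ⟨t, htl, ht, htM⟩ := IsMeasurablyGenerated.exists_measurable_subset hM
  obtain ⟨i, hi⟩ : tᶜ ∈ range N := hN.superset ⟨ht.compl, by rwa [compl_compl]⟩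
  exact ⟨i, hi ▸ subset_compl_comm.1 htM⟩

end Enumeration

/-- A σ-ideal is encoded by its dual filter `l`: the sets `M` with `Mᶜ ∈ l` are the meagre sets for
`l = residual ℝ` and the null sets for `l = ae μ`. -/
theorem stmt_15_general.{u} {G : Type u} [AddCommGroup G] [MeasurableSpace G]
    [MeasurableSpace.CountablyGenerated G] {l : Filter G} [CountableInterFilter l] [NeBot l]
    [l.IsMeasurablyGenerated] (hCH : (𝔠 : Cardinal.{u}) = ℵ₁)
    (hsub : ∀ p : G, Tendsto (p - ·) l l)
    (hdouble : Tendsto (fun x : G => x + x) l cofinite) :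
    ∃ L : Set G, #L = 𝔠 ∧ (∀ M, Mᶜ ∈ l → (L ∩ M).Countable) ∧
      ∀ P, MeasurableSet P → ¬ P.Countable →
        (P ∩ (L + L)).Nonempty ∧ (P ∩ (L + L)ᶜ).Nonempty := by
  let ι : Type u := (ℵ₁ : Cardinal.{u}).ord.ToType
  have hι : #ι = ℵ₁ := mk_ord_toType ℵ₁
  have hcount (i : ι) : (Iio i).Countable := countable_Iio_toType_ord_aleph_one i
  have hmeas : #{s : Set G | MeasurableSet s} ≤ #ι :=
    mk_measurableSet_le_continuum.trans (hCH.trans hι.symm).le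
  have hl : l ≤ cofinite := le_cofinite_of_tendsto hdouble
  obtain ⟨N, hN, hNcofinal⟩ := exists_forall_compl_mem_exists_superset (l := l) hmeas
  obtain ⟨P, hP⟩ := exists_range_eq_setOf_measurableSet_and (p := (¬ ·.Countable)) hmeas
    ⟨univ, MeasurableSet.univ, not_countable_univ_of_le_cofinite hl⟩
  obtain ⟨F, hF⟩ := Stage.exists_forall_extends hcount hsub hdouble hN
    fun i => (hP.subset (mem_range_self i)).2
  let L : Set G := ⋃ i, (F i).summands
  have hdisj (k i : ι) (hki : k ≤ i) : Disjoint (F i).summands (N k) :=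
    (hF i).disjoint_summands.mono_right (subset_biUnion_of_mem (u := N) hki)
  have hLuncountable : ¬ L.Countable := fun hL => by
    obtain ⟨k, hk⟩ := hNcofinal L (compl_mem_of_countable hl hL)
    have hleft : (F k).left ∈ (F k).summands := mem_insert _ _
    exact disjoint_left.1 (hdisj k k le_rfl) hleft (hk (mem_iUnion_of_mem k hleft))
  have hsummands (i : ι) : (F i).summands.Countable := (F i).countable_summands
  refine ⟨L, (mk_iUnion_eq_aleph_one hι hsummands hLuncountable).trans hCH.symm,
    fun M hM => ?_, fun B hB hBuncountable => ?_⟩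
  · obtain ⟨k, hk⟩ := hNcofinal M hM
    exact (countable_iUnion_inter_of_disjoint hsummands (hcount k) (hdisj k)).mono
      (inter_subset_inter_right L hk)
  · obtain ⟨k, rfl⟩ := hP.superset ⟨hB, hBuncountable⟩
    exact ⟨⟨_, (hF k).left_add_right_mem, Stage.left_add_right_mem_iUnion_add_iUnion F k⟩,
      ⟨_, (hF k).avoided_mem, Stage.avoided_notMem_iUnion_add_iUnion hF k⟩⟩

section Residual

variable {X : Type*}

instance residual_isMeasurablyGenerated [TopologicalSpace X] [MeasurableSpace X]
    [OpensMeasurableSpace X] : (residual X).IsMeasurablyGenerated where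
  exists_measurable_subset s hs := by
    obtain ⟨U, hopen, hdense, hU, hUs⟩ := mem_residual_iff.1 hs
    exact ⟨⋂₀ U, mem_residual_iff.2 ⟨U, hopen, hdense, hU, subset_rfl⟩,
      MeasurableSet.sInter hU fun t ht => (hopen t ht).measurableSet, hUs⟩

instance residual_neBot [TopologicalSpace X] [BaireSpace X] [Nonempty X] : NeBot (residual X) :=
  forall_mem_nonempty_iff_neBot.1 fun _ hs => (dense_of_mem_residual hs).nonempty

theorem residual_le_cofinite [TopologicalSpace X] [T1Space X] [PerfectSpace X] :
    residual X ≤ cofinite :=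
  le_cofinite_iff_compl_singleton_mem.2 fun x =>
    residual_of_dense_open isOpen_compl_singleton (dense_compl_singleton x)

theorem tendsto_sub_left_residual [TopologicalSpace X] [AddGroup X] [IsTopologicalAddGroup X]
    (p : X) : Tendsto (p - ·) (residual X) (residual X) :=
  (Homeomorph.subLeft p).residual_map_eq.le

theorem tendsto_add_self_residual_cofinite [TopologicalSpace X] [T1Space X] [PerfectSpace X]
    [AddMonoid X] [IsAddTorsionFree X] : Tendsto (fun x : X => x + x) (residual X) cofinite := by
  have hinj : Function.Injective fun x : X => x + x := by
    simpa only [two_nsmul] using nsmul_right_injective (M := X) two_ne_zero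
  exact hinj.tendsto_cofinite.mono_left residual_le_cofinite

end Residual

theorem not_countable_of_perfect {X : Type*} [MetricSpace X] [CompleteSpace X] {P : Set X}
    (hP : Perfect P) (hne : P.Nonempty) : ¬ P.Countable := by
  obtain ⟨f, hfP, -, hf⟩ := hP.exists_nat_bool_injection hne
  have : Uncountable (ℕ → Bool) := by
    rw [← aleph0_lt_mk_iff]
    simpa using cantor ℵ₀
  exact fun hcount => not_countable_univ (α := ℕ → Bool) <|
    countable_of_injective_of_countable_image hf.injOn (hcount.mono (image_univ ▸ hfP))

theorem stmt_15 (hCH : Cardinal.continuum = Cardinal.aleph 1) :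
    ∃ L : Set ℝ, IsLuzin L ∧ IsBernstein (L + L) := by
  obtain ⟨L, hcard, hLuzin, hsplit⟩ := stmt_15_general (continuum_eq_aleph_one_of_univ hCH)
    tendsto_sub_left_residual (tendsto_add_self_residual_cofinite (X := ℝ))
  exact ⟨L, ⟨hcard, hLuzin⟩, fun P hP hne =>
    hsplit P hP.closed.measurableSet (not_countable_of_perfect hP hne)⟩
end

section
/- There exist sets R, P ⊆ ℝ such that R is comeager and Lebesgue null, P is a perfect (nonempty, closed, with no isolated points) nowhere dense Lebesgue null set, and R + P ⊆ R. -/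
open Cardinal MeasureTheory Set
open scoped Pointwise

/-!
Choose integers `m n` tending to infinity and a summable sequence `r n > 0`. On the circle `ℝ / ℤ`,
let `R` consist of the `y` for which some constant `C` satisfies `‖m n • y‖ ≤ C * r n` for
infinitely many `n`, and let `D` consist of the `y` with `‖m n • y‖ ≤ r n` for all `n`. The triangle
inequality gives `R + D ⊆ R`. Multiplication by `m n` preserves Haar measure, so `R` is null by
Borel–Cantelli; it is comeager because the points killed by `m n` become arbitrarily dense.
Multiplication by `m n = 3 ^ (n ^ 2 + 1)` shifts ternary expansions, so, for `r n` of order `9⁻ⁿ`,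
`D` contains every number whose ternary digits are `0` or `1` and vanish off the square positions.
Thus `D` is closed, null and uncountable, and any perfect subset of it can serve as `P`; everything
pulls back from the circle to `ℝ`.
-/

open Filter

section SmallMultiples

variable {E : Type*} [SeminormedAddCommGroup E]

/-- The points `y` such that, up to a constant factor depending on `y`, infinitely many of the
multiples `m n • y` have norm at most `r n`. The factor makes the set stable under addition of
elements of `dirichletSet m r`; it ranges over `ℕ` to keep the union over all factors countable. -/
def frequentlySmallSet (m : ℕ → ℤ) (r : ℕ → ℝ) : Set E :=
  {y | ∃ C : ℕ, ∃ᶠ n in atTop, ‖m n • y‖ ≤ C * r n}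

/-- The Dirichlet set of `m` with rate `r`, on which the multiples `m n • y` tend to `0` uniformly
when `r` does. -/
def dirichletSet (m : ℕ → ℤ) (r : ℕ → ℝ) : Set E :=
  {y | ∀ n, ‖m n • y‖ ≤ r n}

variable {m : ℕ → ℤ} {r : ℕ → ℝ}

theorem dirichletSet_subset_frequentlySmallSet :
    (dirichletSet m r : Set E) ⊆ frequentlySmallSet m r :=
  fun y hy ↦ ⟨1, Frequently.of_forall fun n ↦ by simpa using hy n⟩

theorem frequentlySmallSet_add_dirichletSet_subset :
    (frequentlySmallSet m r + dirichletSet m r : Set E) ⊆ frequentlySmallSet m r := by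
  rintro _ ⟨x, ⟨C, hC⟩, y, hy, rfl⟩
  refine ⟨C + 1, hC.mono fun n hn ↦ ?_⟩
  calc ‖m n • (x + y)‖ ≤ ‖m n • x‖ + ‖m n • y‖ := by rw [zsmul_add]; exact norm_add_le _ _
    _ ≤ C * r n + r n := add_le_add hn (hy n)
    _ = (C + 1 : ℕ) * r n := by push_cast; ring

theorem preimage_frequentlySmallSet_add_preimage_dirichletSet_subset {G : Type*} [AddGroup G]
    (φ : G →+ E) :
    φ ⁻¹' frequentlySmallSet m r + φ ⁻¹' dirichletSet m r ⊆ φ ⁻¹' frequentlySmallSet m r :=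
  (preimage_add_preimage_subset φ).trans (preimage_mono frequentlySmallSet_add_dirichletSet_subset)

theorem isClosed_dirichletSet : IsClosed (dirichletSet m r : Set E) := by
  simp only [dirichletSet, ofPred_forall]
  exact isClosed_iInter fun n ↦ isClosed_le (continuous_zsmul (m n)).norm continuous_const

end SmallMultiples

theorem setOf_frequently_mem_mem_residual {X : Type*} [TopologicalSpace X] {U : ℕ → Set X}
    (hopen : ∀ n, IsOpen (U n)) (hdense : ∀ k, Dense (⋃ n ≥ k, U n)) :
    {x | ∃ᶠ n in atTop, x ∈ U n} ∈ residual X := by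
  have hset : {x | ∃ᶠ n in atTop, x ∈ U n} = ⋂ k, ⋃ n ≥ k, U n := by
    ext x
    simp [frequently_atTop]
  rw [hset]
  exact countable_iInter_mem.2 fun k ↦
    residual_of_dense_open (isOpen_biUnion fun n _ ↦ hopen n) (hdense k)

section Circle

variable {T : ℝ} [hT : Fact (0 < T)]

theorem exists_zsmul_eq_zero_norm_sub_le {q : ℤ} (hq : q ≠ 0) (y : AddCircle T) :
    ∃ z : AddCircle T, q • z = 0 ∧ ‖z - y‖ ≤ T / |(q : ℝ)| := by
  obtain ⟨w, ⟨hw₀, hwT⟩, hw⟩ : ∃ w ∈ Ico 0 (0 + T), (w : AddCircle T) = q • y := by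
    have := mem_univ (q • y)
    rwa [← AddCircle.coe_image_Ico_eq T 0] at this
  refine ⟨y - ((w / q : ℝ) : AddCircle T), ?_, ?_⟩
  · rw [zsmul_sub, ← AddCircle.coe_zsmul, zsmul_eq_mul, mul_div_cancel₀ _ (by exact_mod_cast hq),
      hw, sub_self]
  · calc ‖y - ((w / q : ℝ) : AddCircle T) - y‖ = ‖((w / q : ℝ) : AddCircle T)‖ := by
          rw [sub_sub_cancel_left, norm_neg]
      _ ≤ ‖w / q‖ := QuotientAddGroup.norm_mk_le_norm
      _ = w / |(q : ℝ)| := by rw [norm_div, Real.norm_of_nonneg hw₀, Real.norm_eq_abs]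
      _ ≤ T / |(q : ℝ)| := by gcongr; linarith

variable {m : ℕ → ℤ} {r : ℕ → ℝ}

theorem dense_iUnion_norm_zsmul_lt (hm : Tendsto (fun n ↦ |(m n : ℝ)|) atTop atTop)
    (hr : ∀ n, 0 < r n) (k : ℕ) : Dense (⋃ n ≥ k, {y : AddCircle T | ‖m n • y‖ < r n}) := by
  rw [Metric.dense_iff]
  intro y ε hε
  have hsmall : ∀ᶠ n in atTop, T / |(m n : ℝ)| < ε :=
    (hm.const_div_atTop T).eventually_lt_const hε
  obtain ⟨n, hnε, hmn, hkn⟩ :=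
    (hsmall.and ((hm.eventually_gt_atTop 0).and (eventually_ge_atTop k))).exists
  obtain ⟨z, hz, hzy⟩ := exists_zsmul_eq_zero_norm_sub_le (by simpa using hmn) y
  refine ⟨z, mem_ball_iff_norm.2 (hzy.trans_lt hnε), mem_iUnion₂.2 ⟨n, hkn, ?_⟩⟩
  simpa [hz] using hr n

theorem frequentlySmallSet_mem_residual (hm : Tendsto (fun n ↦ |(m n : ℝ)|) atTop atTop)
    (hr : ∀ n, 0 < r n) : frequentlySmallSet m r ∈ residual (AddCircle T) := by
  have hopen (n : ℕ) : IsOpen {y : AddCircle T | ‖m n • y‖ < r n} :=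
    isOpen_lt (continuous_zsmul (m n)).norm continuous_const
  filter_upwards [setOf_frequently_mem_mem_residual hopen (dense_iUnion_norm_zsmul_lt hm hr)]
    with y hy
  exact ⟨1, hy.mono fun n hn ↦ by simpa using hn.le⟩

theorem isMeagre_compl_preimage_coe_frequentlySmallSet
    (hm : Tendsto (fun n ↦ |(m n : ℝ)|) atTop atTop) (hr : ∀ n, 0 < r n) :
    IsMeagre (((↑) : ℝ → AddCircle T) ⁻¹' frequentlySmallSet m r)ᶜ := by
  rw [IsMeagre, compl_compl]
  exact tendsto_residual_of_isOpenMap (AddCircle.continuous_mk' T) QuotientAddGroup.isOpenMap_coe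
    (frequentlySmallSet_mem_residual hm hr)

theorem volume_norm_zsmul_le {q : ℤ} (hq : q ≠ 0) (ε : ℝ) :
    volume {y : AddCircle T | ‖q • y‖ ≤ ε} ≤ ENNReal.ofReal (2 * ε) := by
  have hpre : {y : AddCircle T | ‖q • y‖ ≤ ε} = (q • ·) ⁻¹' Metric.closedBall 0 ε := by
    ext y
    simp
  rw [hpre, (Measure.measurePreserving_zsmul volume hq).measure_preimage
    Metric.isClosed_closedBall.nullMeasurableSet, AddCircle.volume_closedBall]
  exact ENNReal.ofReal_le_ofReal (min_le_right _ _)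

theorem ae_eventually_lt_norm_zsmul (hm : ∀ n, m n ≠ 0) (hr : Summable r) :
    ∀ᵐ y : AddCircle T, ∀ᶠ n in atTop, r n < ‖m n • y‖ := by
  have hsum : ∑' n, volume {y : AddCircle T | ‖m n • y‖ ≤ r n} ≠ ⊤ :=
    ne_top_of_le_ne_top (hr.mul_left 2).tsum_ofReal_ne_top
      (ENNReal.tsum_le_tsum fun n ↦ volume_norm_zsmul_le (hm n) (r n))
  filter_upwards [ae_eventually_notMem hsum] with y hy
  exact hy.mono fun n hn ↦ not_le.1 hn

theorem volume_frequentlySmallSet_eq_zero (hm : ∀ n, m n ≠ 0) (hr : Summable r) :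
    volume (frequentlySmallSet m r : Set (AddCircle T)) = 0 := by
  have hlarge : ∀ᵐ y : AddCircle T, ∀ C : ℕ, ∀ᶠ n in atTop, C * r n < ‖m n • y‖ :=
    ae_all_iff.2 fun C ↦ ae_eventually_lt_norm_zsmul hm (hr.mul_left _)
  rw [measure_eq_zero_iff_ae_notMem]
  filter_upwards [hlarge] with y hy
  rintro ⟨C, hC⟩
  exact hC ((hy C).mono fun n hn ↦ not_le.2 hn)

theorem quasiMeasurePreserving_coe_addCircle :
    Measure.QuasiMeasurePreserving ((↑) : ℝ → AddCircle T) := by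
  refine ⟨AddCircle.measurable_mk', Measure.AbsolutelyContinuous.mk fun s hs hs₀ ↦ ?_⟩
  have hpiece (a : ℤ) :
      ∀ᵐ x : ℝ ∂volume.restrict (Ioc (a • T) ((a + 1) • T)), (x : AddCircle T) ∉ s := by
    rw [add_one_zsmul]
    exact (AddCircle.measurePreserving_mk T (a • T)).quasiMeasurePreserving.ae
      (measure_eq_zero_iff_ae_notMem.1 hs₀)
  rw [Measure.map_apply AddCircle.measurable_mk' hs, measure_eq_zero_iff_ae_notMem,
    ← Measure.restrict_univ (μ := volume), ← iUnion_Ioc_zsmul hT.out]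
  exact (ae_restrict_iUnion_iff _ _).2 hpiece

theorem volume_preimage_coe_frequentlySmallSet_eq_zero (hm : ∀ n, m n ≠ 0) (hr : Summable r) :
    volume (((↑) : ℝ → AddCircle T) ⁻¹' frequentlySmallSet m r) = 0 :=
  quasiMeasurePreserving_coe_addCircle.preimage_null (volume_frequentlySmallSet_eq_zero hm hr)

end Circle

section CantorDigits

theorem cantorFunction_nonneg {c : ℝ} (hc : 0 ≤ c) (f : ℕ → Bool) : 0 ≤ cantorFunction c f :=
  tsum_nonneg fun _ ↦ cantorFunctionAux_nonneg hc

theorem cantorFunction_le_inv_one_sub {c : ℝ} (hc₀ : 0 ≤ c) (hc₁ : c < 1) (f : ℕ → Bool) :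
    cantorFunction c f ≤ (1 - c)⁻¹ :=
  calc cantorFunction c f ≤ cantorFunction c fun _ ↦ true :=
        cantorFunction_le hc₀ hc₁ fun _ _ ↦ rfl
    _ = ∑' n, c ^ n := rfl
    _ = (1 - c)⁻¹ := tsum_geometric_of_lt_one hc₀ hc₁

theorem cantorFunction_eq_pow_mul {c : ℝ} (hc₀ : 0 ≤ c) (hc₁ : c < 1) {f : ℕ → Bool} {N : ℕ}
    (hf : ∀ k < N, f k = false) :
    cantorFunction c f = c ^ N * cantorFunction c fun k ↦ f (k + N) := by
  induction N generalizing f with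
  | zero => simp
  | succ N ih =>
    rw [cantorFunction_succ f hc₀ hc₁, hf 0 N.succ_pos, ih fun k hk ↦ hf (k + 1) (by lia)]
    simp only [cond_false, zero_add, pow_succ', add_assoc, mul_assoc]

variable {b : ℕ}

theorem pow_zsmul_coe_cantorFunction (hb : 1 < b) (f : ℕ → Bool) (N : ℕ) :
    (b : ℤ) ^ N • (cantorFunction (b : ℝ)⁻¹ f : UnitAddCircle) =
      (cantorFunction (b : ℝ)⁻¹ fun k ↦ f (k + N) : ℝ) := by
  induction N generalizing f with
  | zero => simp
  | succ N ih =>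
    have hb₀ : (b : ℝ) ≠ 0 := by positivity
    have hb₁ : (b : ℝ)⁻¹ < 1 := inv_lt_one_of_one_lt₀ (by exact_mod_cast hb)
    have hshift : (b : ℤ) • (cantorFunction (b : ℝ)⁻¹ f : UnitAddCircle) =
        (cantorFunction (b : ℝ)⁻¹ fun k ↦ f (k + 1) : ℝ) := by
      obtain ⟨d, hd⟩ : ∃ d : ℤ, (cond (f 0) 1 0 : ℝ) = d := ⟨cond (f 0) 1 0, by cases f 0 <;> simp⟩
      rw [cantorFunction_succ f (by positivity) hb₁, hd, ← AddCircle.coe_zsmul, zsmul_eq_mul,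
        Int.cast_natCast, mul_add, mul_inv_cancel_left₀ hb₀, AddCircle.coe_add,
        AddCircle.coe_eq_zero_iff (p := (1 : ℝ)) |>.2 ⟨b * d, by simp⟩, zero_add]
    rw [pow_succ, mul_smul, hshift, ih]
    simp only [add_assoc]

theorem norm_pow_zsmul_coe_cantorFunction_le (hb : 1 < b) {f : ℕ → Bool} {N g : ℕ}
    (hf : ∀ k < g, f (k + N) = false) :
    ‖(b : ℤ) ^ N • (cantorFunction (b : ℝ)⁻¹ f : UnitAddCircle)‖ ≤
      (b : ℝ)⁻¹ ^ g * (1 - (b : ℝ)⁻¹)⁻¹ := by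
  have hb₀ : 0 ≤ (b : ℝ)⁻¹ := by positivity
  have hb₁ : (b : ℝ)⁻¹ < 1 := inv_lt_one_of_one_lt₀ (by exact_mod_cast hb)
  rw [pow_zsmul_coe_cantorFunction hb]
  calc ‖((cantorFunction (b : ℝ)⁻¹ fun k ↦ f (k + N) : ℝ) : UnitAddCircle)‖
      ≤ ‖cantorFunction (b : ℝ)⁻¹ fun k ↦ f (k + N)‖ := QuotientAddGroup.norm_mk_le_norm
    _ = cantorFunction (b : ℝ)⁻¹ fun k ↦ f (k + N) :=
        Real.norm_of_nonneg (cantorFunction_nonneg hb₀ _)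
    _ = (b : ℝ)⁻¹ ^ g * cantorFunction (b : ℝ)⁻¹ fun k ↦ f (k + g + N) :=
        cantorFunction_eq_pow_mul hb₀ hb₁ hf
    _ ≤ (b : ℝ)⁻¹ ^ g * (1 - (b : ℝ)⁻¹)⁻¹ := by
        gcongr
        exact cantorFunction_le_inv_one_sub hb₀ hb₁ _

/-- The digit sequence carrying `g n` at position `n ^ 2` and `false` elsewhere. Deleting the first
`n ^ 2 + 1` digits leaves a sequence starting with `2 * n` zeros. -/
noncomputable def digitsAtSquares (g : ℕ → Bool) : ℕ → Bool :=
  Function.extend (· ^ 2) g fun _ ↦ false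

theorem digitsAtSquares_injective : Function.Injective digitsAtSquares :=
  Function.extend_injective (Nat.pow_left_injective two_ne_zero) _

theorem digitsAtSquares_eq_false (g : ℕ → Bool) {n k : ℕ} (hk : k < 2 * n) :
    digitsAtSquares g (k + (n ^ 2 + 1)) = false :=
  Function.extend_apply' _ _ _ (Nat.not_exists_sq' (m := n) (by lia) (by lia))

/-- The multiplier that shifts base `b` expansions just past the square position `n ^ 2`. -/
def squareShift (b n : ℕ) : ℤ := (b : ℤ) ^ (n ^ 2 + 1)

/-- The bound `∑ k ≥ 2 * n, b⁻¹ ^ k` for a base `b` expansion with digits `0` and `1` that starts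
with `2 * n` zeros, the distance between consecutive squares. -/
noncomputable def squareGapBound (b n : ℕ) : ℝ := (b : ℝ)⁻¹ ^ (2 * n) * (1 - (b : ℝ)⁻¹)⁻¹

theorem squareShift_ne_zero (hb : b ≠ 0) (n : ℕ) : squareShift b n ≠ 0 :=
  pow_ne_zero _ (by exact_mod_cast hb)

theorem tendsto_abs_squareShift (hb : 1 < b) :
    Tendsto (fun n ↦ |(squareShift b n : ℝ)|) atTop atTop := by
  have hexp : Tendsto (fun n : ℕ ↦ n ^ 2 + 1) atTop atTop :=
    (tendsto_add_atTop_nat 1).comp (tendsto_pow_atTop two_ne_zero)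
  have hpow : Tendsto (fun k : ℕ ↦ (b : ℝ) ^ k) atTop atTop :=
    tendsto_pow_atTop_atTop_of_one_lt (by exact_mod_cast hb)
  simpa [squareShift, Function.comp_def] using hpow.comp hexp

theorem squareGapBound_pos (hb : 1 < b) (n : ℕ) : 0 < squareGapBound b n := by
  have hb₁ : (b : ℝ)⁻¹ < 1 := inv_lt_one_of_one_lt₀ (by exact_mod_cast hb)
  exact mul_pos (by positivity) (inv_pos.2 (sub_pos.2 hb₁))

theorem summable_squareGapBound (hb : 1 < b) : Summable (squareGapBound b) := by
  have hb₁ : (b : ℝ)⁻¹ < 1 := inv_lt_one_of_one_lt₀ (by exact_mod_cast hb)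
  have hgeom : Summable fun n ↦ ((b : ℝ)⁻¹ ^ 2) ^ n :=
    summable_geometric_of_lt_one (by positivity) (pow_lt_one₀ (by positivity) hb₁ two_ne_zero)
  refine (hgeom.mul_right (1 - (b : ℝ)⁻¹)⁻¹).congr fun n ↦ ?_
  rw [squareGapBound, pow_mul]

theorem coe_cantorFunction_digitsAtSquares_mem_dirichletSet (hb : 1 < b) (g : ℕ → Bool) :
    (cantorFunction (b : ℝ)⁻¹ (digitsAtSquares g) : UnitAddCircle) ∈
      dirichletSet (squareShift b) (squareGapBound b) :=
  fun _ ↦ norm_pow_zsmul_coe_cantorFunction_le hb fun _ ↦ digitsAtSquares_eq_false g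

theorem not_countable_preimage_coe_dirichletSet_squareShift (hb : 2 < b) :
    ¬ (((↑) : ℝ → UnitAddCircle) ⁻¹'
      dirichletSet (squareShift b) (squareGapBound b)).Countable := by
  have hb₂ : (b : ℝ)⁻¹ < 1 / 2 := by
    rw [one_div]
    exact inv_strictAnti₀ two_pos (by exact_mod_cast hb)
  have hinj : Function.Injective fun g ↦ cantorFunction (b : ℝ)⁻¹ (digitsAtSquares g) :=
    (cantorFunction_injective (by positivity) hb₂).comp digitsAtSquares_injective
  have : Uncountable (ℕ → Bool) := Cardinal.aleph0_lt_mk_iff.1 (by simp [aleph0_lt_continuum])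
  refine fun hcountable ↦ not_countable_univ (α := ℕ → Bool) ?_
  refine Countable.mono (fun g _ ↦ ?_) (hcountable.preimage hinj)
  exact coe_cantorFunction_digitsAtSquares_mem_dirichletSet (by lia) g

end CantorDigits

theorem stmt_17 :
    ∃ R P : Set ℝ, IsMeagre Rᶜ ∧ volume R = 0 ∧
      Perfect P ∧ P.Nonempty ∧ IsNowhereDense P ∧ volume P = 0 ∧
      R + P ⊆ R := by
  let π : ℝ →+ UnitAddCircle := QuotientAddGroup.mk' _
  let R : Set ℝ := π ⁻¹' frequentlySmallSet (squareShift 3) (squareGapBound 3)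
  let D : Set ℝ := π ⁻¹' dirichletSet (squareShift 3) (squareGapBound 3)
  have hR_comeager : IsMeagre Rᶜ :=
    isMeagre_compl_preimage_coe_frequentlySmallSet (tendsto_abs_squareShift (by lia))
      (squareGapBound_pos (by lia))
  have hR_null : volume R = 0 :=
    volume_preimage_coe_frequentlySmallSet_eq_zero (squareShift_ne_zero (by lia))
      (summable_squareGapBound (by lia))
  have hD_closed : IsClosed D := isClosed_dirichletSet.preimage (AddCircle.continuous_mk' 1)
  have hDR : D ⊆ R := preimage_mono dirichletSet_subset_frequentlySmallSet
  have hR_add : R + D ⊆ R := preimage_frequentlySmallSet_add_preimage_dirichletSet_subset π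
  obtain ⟨P, hP, hP_nonempty, hPD⟩ := exists_perfect_nonempty_of_isClosed_of_not_countable
    hD_closed (not_countable_preimage_coe_dirichletSet_squareShift (by lia))
  have hP_null : volume P = 0 := measure_mono_null (hPD.trans hDR) hR_null
  exact ⟨R, P, hR_comeager, hR_null, hP, hP_nonempty, .of_isClosed_null hP.closed hP_null,
    hP_null, (add_subset_add_left hPD).trans hR_add⟩
end

section
/- For every Lebesgue null set A ⊆ ℝ there exists a perfect set P ⊆ ℝ (nonempty, closed, with no isolated points) such that for every natural number n ≥ 1, the set A + ⊕ⁿP = A + P + ⋯ + P (n copies of P) is Lebesgue null. -/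
open Cardinal MeasureTheory Set
open scoped Pointwise

/-! A null set `A` lies in infinitely many members of a sequence `V j` such that some thickening of
`V j` has measure at most any prescribed `e j > 0`: split a small open neighbourhood of `A` into
layers according to the distance to its complement. The perfect set `P` consists of all subset sums
of a series whose terms decrease so fast that `P` is covered by `2 ^ j` balls whose radius is tiny
compared with the thickening radius of `V j`. For `n ≤ j` the set `V j + ⊕ⁿP` is therefore contained
in `2 ^ (j * n) ≤ 2 ^ (j * j)` translates of the thickening of `V j`; taking
`e j = 2 ^ (-(j * j + j))`, Borel–Cantelli shows that `A + ⊕ⁿP` is null. -/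

open Filter Metric
open scoped ENNReal Topology

section ThickeningCover

variable {X : Type*} [PseudoEMetricSpace X]

lemma iUnion_compl_thickening_compl {U : Set X} (hU : IsOpen U) {r : ℕ → ℝ}
    (hr : Tendsto r atTop (𝓝 0)) (hr_pos : ∀ j, 0 < r j) :
    ⋃ j, (thickening (r j) Uᶜ)ᶜ = U := by
  refine Subset.antisymm (iUnion_subset fun j ↦ ?_) fun x hx ↦ ?_
  · exact compl_subset_comm.1 (self_subset_thickening (hr_pos j) Uᶜ)
  · have hx' : x ∉ closure Uᶜ := by rwa [hU.isClosed_compl.closure_eq, notMem_compl_iff]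
    exact mem_iUnion.2 (hr.eventually (eventually_notMem_thickening_of_infEDist_pos hx')).exists

variable [MeasurableSpace X] [OpensMeasurableSpace X] {μ : Measure X}

lemma tendsto_measure_thickening_compl_inter {U : Set X} (hU : IsOpen U) (hμU : μ U ≠ ∞) :
    Tendsto (fun r ↦ μ (thickening r Uᶜ ∩ U)) (𝓝[>] 0) (𝓝 0) := by
  have hlim := tendsto_measure_thickening_of_isClosed (μ := μ.restrict U)
    ⟨1, one_pos, ne_top_of_le_ne_top hμU ((measure_mono (subset_univ _)).trans_eq (by simp))⟩
    hU.isClosed_compl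
  simpa only [Measure.restrict_apply isOpen_thickening.measurableSet,
    Measure.restrict_apply hU.measurableSet.compl, compl_inter_self, measure_empty] using hlim

lemma exists_iUnion_eq_measure_thickening_le {U : Set X} (hU : IsOpen U) (hμU : μ U ≠ ∞)
    {e : ℕ → ℝ≥0∞} (he_zero : μ U ≤ e 0) (he_succ : ∀ j, 0 < e (j + 1)) :
    ∃ (V : ℕ → Set X) (δ : ℕ → ℝ), (∀ j, 0 < δ j) ∧ ⋃ j, V j = U ∧
      ∀ j, μ (thickening (δ j) (V j)) ≤ e j := by
  have hr (j : ℕ) : ∃ r : ℝ, 0 < r ∧ r < 1 / (j + 1) ∧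
      μ (thickening (r + r) Uᶜ ∩ U) ≤ e (j + 1) := by
    obtain ⟨s, hs, hs_pos, hs_lt⟩ :=
      (((tendsto_measure_thickening_compl_inter hU hμU).eventually (ge_mem_nhds (he_succ j))).and
        (Ioo_mem_nhdsGT (Nat.one_div_pos_of_nat (α := ℝ) (n := j)))).exists
    exact ⟨s / 2, half_pos hs_pos, (half_lt_self hs_pos).trans hs_lt, by rwa [add_halves]⟩
  choose r hr_pos hr_lt hr_le using hr
  have hr_lim : Tendsto r atTop (𝓝 0) :=
    squeeze_zero (fun j ↦ (hr_pos j).le) (fun j ↦ (hr_lt j).le)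
      tendsto_one_div_add_atTop_nhds_zero_nat
  let K (j : ℕ) : Set X := (thickening (r j) Uᶜ)ᶜ
  have hK (j : ℕ) : thickening (r j) (disjointed K j) ⊆ U :=
    (thickening_subset_of_subset _ (disjointed_subset K j)).trans
      ((thickening_compl_thickening_self_subset_compl _ _).trans (compl_compl U).subset)
  -- For `j = 0` the truncated `j - 1` is `0`, which is harmless: no outer layer precedes `K 0`.
  refine ⟨disjointed K, fun j ↦ min (r j) (r (j - 1)), fun j ↦ lt_min (hr_pos _) (hr_pos _),
    iUnion_disjointed.trans (iUnion_compl_thickening_compl hU hr_lim hr_pos), fun j ↦ ?_⟩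
  have hj : thickening (min (r j) (r (j - 1))) (disjointed K j) ⊆ U :=
    (thickening_mono (min_le_left _ _) _).trans (hK j)
  cases j with
  | zero => exact (measure_mono hj).trans he_zero
  | succ i =>
    have hlayer : disjointed K (i + 1) ⊆ thickening (r i) Uᶜ := by
      rw [disjointed_eq_inter_compl]
      exact fun x hx ↦ notMem_compl_iff.1 (mem_iInter₂.1 hx.2 i i.lt_succ_self)
    have hnear : thickening (min (r (i + 1)) (r i)) (disjointed K (i + 1)) ⊆
        thickening (r i + r i) Uᶜ :=
      (thickening_mono (min_le_right _ _) _).trans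
        ((thickening_subset_of_subset _ hlayer).trans (thickening_thickening_subset _ _ _))
    exact (measure_mono (subset_inter hnear hj)).trans (hr_le i)

lemma exists_frequently_mem_measure_thickening_le [μ.OuterRegular] {A : Set X} (hA : μ A = 0)
    {e : ℕ → ℝ≥0∞} (he : ∀ j, 0 < e j) :
    ∃ (V : ℕ → Set X) (δ : ℕ → ℝ), (∀ j, 0 < δ j) ∧ (∀ a ∈ A, ∃ᶠ j in atTop, a ∈ V j) ∧
      ∀ j, μ (thickening (δ j) (V j)) ≤ e j := by
  have hcover (m : ℕ) : ∃ (V : ℕ → Set X) (δ : ℕ → ℝ), (∀ j, 0 < δ j) ∧ A ⊆ ⋃ j, V j ∧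
      ∀ j, μ (thickening (δ j) (V j)) ≤ e (Nat.pair m j) := by
    obtain ⟨U, hAU, hU, hμU⟩ := A.exists_isOpen_lt_of_lt _ (hA.trans_lt (he (Nat.pair m 0)))
    obtain ⟨V, δ, hδ, hV, hμV⟩ := exists_iUnion_eq_measure_thickening_le hU hμU.ne_top
      (e := fun j ↦ e (Nat.pair m j)) hμU.le fun j ↦ he _
    exact ⟨V, δ, hδ, hV ▸ hAU, hμV⟩
  choose V δ hδ hV hμV using hcover
  refine ⟨fun k ↦ V k.unpair.1 k.unpair.2, fun k ↦ δ k.unpair.1 k.unpair.2, fun k ↦ hδ _ _,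
    fun a ha ↦ frequently_atTop.2 fun m ↦ ?_, fun k ↦ ?_⟩
  · obtain ⟨j, hj⟩ := mem_iUnion.1 (hV m ha)
    exact ⟨Nat.pair m j, Nat.left_le_pair m j, by simpa only [Nat.unpair_pair] using hj⟩
  · simpa only [Nat.pair_unpair] using hμV k.unpair.1 k.unpair.2

end ThickeningCover

section AchievementSet

variable {E : Type*} [NormedAddCommGroup E]

/-- The achievement set of the series `∑ d i`: the set of sums of all its subseries. A subseries is
encoded by the indicator `x : ℕ → Bool` of the set of indices it retains. -/
def achievementSet (d : ℕ → E) : Set E :=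
  range fun x : ℕ → Bool ↦ ∑' i, cond (x i) (d i) 0

lemma norm_cond_zero_le (b : Bool) (v : E) : ‖cond b v 0‖ ≤ ‖v‖ := by
  cases b <;> simp

lemma achievementSet_nonempty (d : ℕ → E) : (achievementSet d).Nonempty :=
  range_nonempty _

lemma exists_ne_zero_summable_tsum_norm_le [(𝓝[≠] (0 : E)).NeBot] {η : ℕ → ℝ} (hη : ∀ j, 0 < η j) :
    ∃ d : ℕ → E, (∀ i, d i ≠ 0) ∧ (Summable fun i ↦ ‖d i‖) ∧
      ∀ j, ∑' i, ‖d (i + j)‖ ≤ η j := by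
  have hsmall (k : ℕ) : ∃ v ∈ ({0}ᶜ : Set E), ∀ j ≤ k, ‖v‖ < η j / 2 / 2 ^ k := by
    have hnorm : ∀ᶠ v : E in 𝓝 0, ∀ j ∈ Iic k, ‖v‖ < η j / 2 / 2 ^ k :=
      (eventually_all_finite (finite_Iic k)).2 fun j _ ↦
        tendsto_norm_zero.eventually (gt_mem_nhds (div_pos (half_pos (hη j)) (by positivity)))
    exact (eventually_mem_nhdsWithin.and (hnorm.filter_mono nhdsWithin_le_nhds)).exists
  choose d hd_ne hd_lt using hsmall
  have hle (j i : ℕ) : ‖d (i + j)‖ ≤ η j / 2 / 2 ^ i :=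
    (hd_lt (i + j) j (Nat.le_add_left j i)).le.trans <|
      div_le_div_of_nonneg_left (half_pos (hη j)).le (by positivity)
        (pow_le_pow_right₀ one_le_two (Nat.le_add_right i j))
  have hsum (j : ℕ) : Summable fun i ↦ ‖d (i + j)‖ :=
    (summable_geometric_two' (η j)).of_nonneg_of_le (fun _ ↦ norm_nonneg _) (hle j)
  exact ⟨d, hd_ne, hsum 0, fun j ↦
    ((hsum j).tsum_le_tsum (hle j) (summable_geometric_two' _)).trans_eq (tsum_geometric_two' _)⟩

variable [CompleteSpace E] {d : ℕ → E}

lemma summable_cond (hd : Summable fun i ↦ ‖d i‖) (x : ℕ → Bool) :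
    Summable fun i ↦ cond (x i) (d i) 0 :=
  hd.of_norm_bounded fun i ↦ norm_cond_zero_le (x i) (d i)

lemma isCompact_achievementSet (hd : Summable fun i ↦ ‖d i‖) : IsCompact (achievementSet d) :=
  isCompact_range <| continuous_tsum
    (fun i ↦ (continuous_of_discreteTopology (f := fun b ↦ cond b (d i) 0)).comp
      (continuous_apply i))
    hd fun i x ↦ norm_cond_zero_le (x i) (d i)

lemma perfect_achievementSet (hd : Summable fun i ↦ ‖d i‖) (hd_ne : ∃ᶠ i in atTop, d i ≠ 0) :
    Perfect (achievementSet d) := by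
  refine ⟨(isCompact_achievementSet hd).isClosed, ?_⟩
  rintro _ ⟨x, rfl⟩
  refine accPt_iff_nhds.2 fun u hu ↦ ?_
  obtain ⟨ρ, hρ, hball⟩ := Metric.mem_nhds_iff.1 hu
  obtain ⟨i, hi_ne, hi_lt⟩ :=
    (hd_ne.and_eventually (hd.tendsto_atTop_zero.eventually (gt_mem_nhds hρ))).exists
  set y := Function.update x i (!x i)
  have hdist : dist (∑' k, cond (y k) (d k) 0) (∑' k, cond (x k) (d k) 0) = ‖d i‖ := by
    rw [dist_eq_norm, ← (summable_cond hd y).tsum_sub (summable_cond hd x), tsum_eq_single i]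
    · cases hx : x i <;> simp [y, hx]
    · intro k hk
      simp [y, Function.update_of_ne hk]
  refine ⟨_, ⟨hball (mem_ball.2 (hdist.trans_lt hi_lt)), mem_range_self y⟩, ?_⟩
  exact dist_ne_zero.1 (hdist ▸ norm_ne_zero_iff.2 hi_ne)

lemma exists_finset_achievementSet_subset (hd : Summable fun i ↦ ‖d i‖) (j : ℕ) :
    ∃ F : Finset E, F.card ≤ 2 ^ j ∧
      achievementSet d ⊆ (F : Set E) + closedBall 0 (∑' i, ‖d (i + j)‖) := by
  classical
  refine ⟨(Finset.range j).powerset.image fun s ↦ ∑ i ∈ s, d i,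
    Finset.card_image_le.trans (by simp), ?_⟩
  rintro _ ⟨x, rfl⟩
  refine ⟨∑ i ∈ Finset.range j with x i, d i, Finset.mem_image_of_mem _ (by simp),
    ∑' i, cond (x (i + j)) (d (i + j)) 0, ?_, ?_⟩
  · rw [mem_closedBall_zero_iff]
    exact tsum_of_norm_bounded ((summable_nat_add_iff j).2 hd).hasSum fun i ↦
      norm_cond_zero_le _ _
  · simpa only [Finset.sum_filter, Bool.cond_eq_ite] using
      (summable_cond hd x).sum_add_tsum_nat_add j

lemma exists_perfect_subset_finset_add_closedBall (E : Type*) [NormedAddCommGroup E]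
    [CompleteSpace E] [(𝓝[≠] (0 : E)).NeBot] {η : ℕ → ℝ} (hη : ∀ j, 0 < η j) :
    ∃ P : Set E, Perfect P ∧ P.Nonempty ∧ ∀ j, ∃ F : Finset E, F.card ≤ 2 ^ j ∧
      P ⊆ (F : Set E) + closedBall 0 (η j) := by
  obtain ⟨d, hd_ne, hd, hd_tail⟩ := exists_ne_zero_summable_tsum_norm_le (E := E) hη
  refine ⟨achievementSet d, perfect_achievementSet hd (Frequently.of_forall hd_ne),
    achievementSet_nonempty d, fun j ↦ ?_⟩
  obtain ⟨F, hF_card, hF⟩ := exists_finset_achievementSet_subset hd j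
  exact ⟨F, hF_card, hF.trans (add_subset_add_left (closedBall_subset_closedBall (hd_tail j)))⟩

end AchievementSet

section MinkowskiSum

lemma measure_add_eq_zero_of_frequently_mem {G : Type*} [Add G] [MeasurableSpace G] {μ : Measure G}
    {A Q : Set G} {V : ℕ → Set G} {u : ℕ → ℝ≥0∞} (hA : ∀ a ∈ A, ∃ᶠ j in atTop, a ∈ V j)
    (hV : ∀ᶠ j in atTop, μ (V j + Q) ≤ u j) (hu : ∑' j, u j ≠ ∞) : μ (A + Q) = 0 := by
  have hle (j : ℕ) : μ {x | x ∈ V j + Q ∧ μ (V j + Q) ≤ u j} ≤ u j := by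
    by_cases hj : μ (V j + Q) ≤ u j <;> simp [hj]
  refine measure_mono_null ?_ (measure_setOfPred_frequently_eq_zero
    (ne_top_of_le_ne_top hu (ENNReal.tsum_le_tsum hle)))
  rintro _ ⟨a, ha, q, hq, rfl⟩
  exact ((hA a ha).mono fun j hj ↦ add_mem_add hj hq).and_eventually hV

lemma measure_finset_add_le {G : Type*} [AddGroup G] [MeasurableSpace G] [MeasurableAdd G]
    (μ : Measure G) [μ.IsAddLeftInvariant] (S : Finset G) (T : Set G) :
    μ ((S : Set G) + T) ≤ S.card * μ T := by
  calc μ ((S : Set G) + T) = μ (⋃ s ∈ S, s +ᵥ T) := by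
        simp only [← Finset.mem_coe, iUnion_vadd_set, vadd_eq_add]
    _ ≤ ∑ s ∈ S, μ (s +ᵥ T) := measure_biUnion_finset_le _ _
    _ = S.card * μ T := by simp only [measure_vadd, Finset.sum_const, nsmul_eq_mul]

variable {E : Type*} [SeminormedAddCommGroup E]

lemma exists_finset_sum_subset {P : Set E} {F : Finset E} {r : ℝ}
    (hP : P ⊆ (F : Set E) + closedBall 0 r) (n : ℕ) :
    ∃ S : Finset E, S.card ≤ F.card ^ n ∧
      ∑ _i ∈ Finset.range n, P ⊆ (S : Set E) + closedBall 0 (n * r) := by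
  classical
  induction n with
  | zero => exact ⟨{0}, by simp, by simp⟩
  | succ n ih =>
    obtain ⟨S, hS, hnP⟩ := ih
    refine ⟨S + F, ?_, ?_⟩
    · rw [pow_succ]
      exact Finset.card_add_le.trans (Nat.mul_le_mul_right _ hS)
    · have hball : closedBall (0 : E) (n * r) + closedBall 0 r ⊆
          closedBall 0 ((n + 1 : ℕ) * r) := by
        rintro _ ⟨a, ha, b, hb, rfl⟩
        rw [mem_closedBall_zero_iff] at ha hb ⊢
        exact (norm_add_le_of_le ha hb).trans_eq (by push_cast; ring)
      rw [Finset.sum_range_succ, Finset.coe_add]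
      exact (add_subset_add hnP hP).trans
        ((add_add_add_comm _ _ _ _).subset.trans (add_subset_add_left hball))

lemma measure_add_sum_le [MeasurableSpace E] [MeasurableAdd E] (μ : Measure E)
    [μ.IsAddLeftInvariant] {P : Set E} {F : Finset E} {r δ : ℝ} {n : ℕ}
    (hP : P ⊆ (F : Set E) + closedBall 0 r) (hδ : n * r < δ) (V : Set E) :
    μ (V + ∑ _i ∈ Finset.range n, P) ≤ F.card ^ n * μ (thickening δ V) := by
  obtain ⟨S, hS_card, hS⟩ := exists_finset_sum_subset hP n
  have hsub : V + ∑ _i ∈ Finset.range n, P ⊆ (S : Set E) + thickening δ V := calc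
    V + ∑ _i ∈ Finset.range n, P ⊆ V + ((S : Set E) + ball 0 δ) :=
      add_subset_add_left (hS.trans (add_subset_add_left (closedBall_subset_ball hδ)))
    _ = (S : Set E) + thickening δ V := by rw [add_left_comm, add_ball_zero]
  calc μ (V + ∑ _i ∈ Finset.range n, P)
      ≤ S.card * μ (thickening δ V) := (measure_mono hsub).trans (measure_finset_add_le μ S _)
    _ ≤ F.card ^ n * μ (thickening δ V) := by gcongr; exact_mod_cast hS_card

end MinkowskiSum

lemma nFoldSum_eq_sum (P : Set ℝ) (n : ℕ) : nFoldSum P n = ∑ _i ∈ Finset.range n, P := by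
  induction n with
  | zero => rfl
  | succ n ih => rw [nFoldSum, ih, Finset.sum_range_succ]

/-- The `n`-fold sum is written with `∑` because `n • P` could also denote the dilation of `P`. -/
theorem stmt_18_general {E : Type*} [NormedAddCommGroup E] [CompleteSpace E]
    [(𝓝[≠] (0 : E)).NeBot] [MeasurableSpace E] [BorelSpace E] {μ : Measure E} [μ.OuterRegular]
    [μ.IsAddLeftInvariant] {A : Set E} (hA : μ A = 0) :
    ∃ P : Set E, Perfect P ∧ P.Nonempty ∧ ∀ n : ℕ, μ (A + ∑ _i ∈ Finset.range n, P) = 0 := by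
  obtain ⟨V, δ, hδ, hAV, hμV⟩ := exists_frequently_mem_measure_thickening_le hA
    (e := fun j ↦ (2 ^ (j * j))⁻¹ * 2⁻¹ ^ j) fun j ↦
      ENNReal.mul_pos (by simp) (pow_ne_zero j (by simp))
  obtain ⟨P, hP, hP_ne, hP_cover⟩ := exists_perfect_subset_finset_add_closedBall E
    (η := fun j ↦ δ j / (j + 1)) fun j ↦ div_pos (hδ j) j.cast_add_one_pos
  refine ⟨P, hP, hP_ne, fun n ↦ measure_add_eq_zero_of_frequently_mem hAV
    (u := fun j ↦ 2⁻¹ ^ j) ?_ (by simp [ENNReal.tsum_geometric])⟩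
  filter_upwards [eventually_ge_atTop n] with j hnj
  obtain ⟨F, hF_card, hF⟩ := hP_cover j
  have hr : n * (δ j / (j + 1)) < δ j := by
    rw [mul_div_left_comm]
    exact mul_lt_of_lt_one_right (hδ j) ((div_lt_one j.cast_add_one_pos).2 (by norm_cast; omega))
  have hcard : F.card ^ n ≤ 2 ^ (j * j) := calc
    F.card ^ n ≤ (2 ^ j) ^ n := Nat.pow_le_pow_left hF_card n
    _ ≤ (2 ^ j) ^ j := Nat.pow_le_pow_right (by positivity) hnj
    _ = 2 ^ (j * j) := (pow_mul ..).symm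
  calc μ (V j + ∑ _i ∈ Finset.range n, P)
      ≤ F.card ^ n * μ (thickening (δ j) (V j)) := measure_add_sum_le μ hF hr (V j)
    _ ≤ 2 ^ (j * j) * ((2 ^ (j * j))⁻¹ * 2⁻¹ ^ j) := mul_le_mul' (mod_cast hcard) (hμV j)
    _ = 2⁻¹ ^ j := by
      rw [← mul_assoc, ENNReal.mul_inv_cancel (by simp) (by finiteness), one_mul]

theorem stmt_18 (A : Set ℝ) (hA : volume A = 0) :
    ∃ P : Set ℝ, Perfect P ∧ P.Nonempty ∧
      ∀ n : ℕ, 1 ≤ n → volume (A + nFoldSum P n) = 0 := by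
  obtain ⟨P, hP, hP_ne, hAP⟩ := stmt_18_general hA
  exact ⟨P, hP, hP_ne, fun n _ ↦ nFoldSum_eq_sum P n ▸ hAP n⟩
end

section
/- For every Luzin set L ⊆ ℝ and every Sierpiński set S ⊆ ℝ, the Minkowski sum L + S is not a Bernstein set. -/
open Cardinal MeasureTheory Set
open scoped Pointwise

/-!
Fix a compact, Lebesgue null, uncountable set `P`. Covering a dense sequence by ever thinner open
neighbourhoods yields a residual set `U` for which `-U + P` is still null. A sum `l + s ∈ P` with
`l ∈ U` has `s ∈ -U + P`, so in every sum landing in `P` either `l` or `s` ranges over a countable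
set; fixing that summand leaves the other one in a translate of `P`, which is null and nowhere
dense. Hence `P ∩ (L + S)` is countable. A Bernstein set, however, meets every uncountable Borel set
in uncountably many points: an uncountable Borel set stays so when countably many points are
removed, hence what remains contains a perfect set.
-/

open Filter Topology TopologicalSpace

section UncountableAndMeagre

variable {X : Type*} [TopologicalSpace X]

theorem exists_nat_bool_injection_of_measurableSet [PolishSpace X] [MeasurableSpace X]
    [BorelSpace X] {A : Set X} (hA : MeasurableSet A) (hA_unc : ¬ A.Countable) :
    ∃ f : (ℕ → Bool) → X, range f ⊆ A ∧ Continuous f ∧ f.Injective := by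
  -- In a finer Polish topology `A` is closed, and continuity survives coarsening the codomain.
  obtain ⟨t, t_le, t_polish, A_closed, -⟩ := hA.isClopenable
  obtain ⟨f, f_range, f_cont, f_inj⟩ :=
    @IsClosed.exists_nat_bool_injection_of_not_countable X t t_polish A A_closed hA_unc
  exact ⟨f, f_range, continuous_le_rng t_le f_cont, f_inj⟩

theorem exists_isCompact_subset_not_countable [PolishSpace X] [MeasurableSpace X] [BorelSpace X]
    {A : Set X} (hA : MeasurableSet A) (hA_unc : ¬ A.Countable) :
    ∃ K ⊆ A, IsCompact K ∧ ¬ K.Countable := by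
  obtain ⟨f, f_range, f_cont, f_inj⟩ := exists_nat_bool_injection_of_measurableSet hA hA_unc
  have : Uncountable (ℕ → Bool) := by simp [← aleph0_lt_mk_iff, aleph0_lt_continuum]
  refine ⟨range f, f_range, isCompact_range f_cont, fun h => ?_⟩
  have univ_countable : (univ : Set (ℕ → Bool)).Countable :=
    countable_of_injective_of_countable_image f_inj.injOn (by rwa [image_univ])
  exact not_countable_univ univ_countable

theorem isMeagre_of_countable [T1Space X] [PerfectSpace X] {s : Set X} (hs : s.Countable) :
    IsMeagre s := by
  rw [← biUnion_of_singleton s]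
  exact isMeagre_biUnion hs fun x _ =>
    (isClosed_singleton.isNowhereDense_iff.2 (interior_singleton x)).isMeagre

theorem not_countable_of_mem_residual [T1Space X] [PerfectSpace X] [BaireSpace X] [Nonempty X]
    {s : Set X} (hs : s ∈ residual X) : ¬ s.Countable :=
  fun h => not_isMeagre_of_mem_residual hs (isMeagre_of_countable h)

theorem isMeagre_of_isClosed_null [MeasurableSpace X] {μ : Measure X} [μ.IsOpenPosMeasure]
    {s : Set X} (hs : IsClosed s) (hs_null : μ s = 0) : IsMeagre s :=
  (hs.isNowhereDense_iff.2 (Measure.interior_eq_empty_of_null hs_null)).isMeagre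

end UncountableAndMeagre

theorem exists_isCompact_null_not_countable :
    ∃ P : Set ℝ, IsCompact P ∧ volume P = 0 ∧ ¬ P.Countable := by
  obtain ⟨P, P_sub, P_compact, P_unc⟩ := exists_isCompact_subset_not_countable
    IsGδ.setOfPred_liouville.measurableSet
    (not_countable_of_mem_residual eventually_residual_liouville)
  exact ⟨P, P_compact, measure_mono_null P_sub volume_setOfPred_liouville, P_unc⟩

theorem IsBernstein.countable_of_countable_inter {X B : Set ℝ} (hX : IsBernstein X)
    (hB : MeasurableSet B) (hBX : (B ∩ X).Countable) : B.Countable := by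
  suffices h : (B \ X).Countable by simpa only [inter_union_sdiff] using hBX.union h
  by_contra h_unc
  have h_meas : MeasurableSet (B \ X) := by
    simpa only [sdiff_self_inter] using hB.diff hBX.measurableSet
  obtain ⟨K, hK, K_compact, K_unc⟩ := exists_isCompact_subset_not_countable h_meas h_unc
  obtain ⟨D, D_perfect, D_nonempty, hD⟩ :=
    exists_perfect_nonempty_of_isClosed_of_not_countable K_compact.isClosed K_unc
  obtain ⟨x, hxD, hxX⟩ := (hX D D_perfect D_nonempty).1
  exact (hK (hD hxD)).2 hxX

theorem countable_inter_add_of_countable_left {G : Type*} [Add G] {P A B : Set G}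
    (hA : A.Countable) (h : ∀ a ∈ A, (B ∩ (a + ·) ⁻¹' P).Countable) :
    (P ∩ (A + B)).Countable := by
  refine (hA.biUnion fun a ha => (h a ha).image (a + ·)).mono ?_
  rintro _ ⟨hP, a, ha, b, hb, rfl⟩
  exact mem_biUnion ha ⟨b, ⟨hb, hP⟩, rfl⟩

theorem countable_inter_add_of_countable_right {G : Type*} [Add G] {P A B : Set G}
    (hB : B.Countable) (h : ∀ b ∈ B, (A ∩ (· + b) ⁻¹' P).Countable) :
    (P ∩ (A + B)).Countable := by
  refine (hB.biUnion fun b hb => (h b hb).image (· + b)).mono ?_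
  rintro _ ⟨hP, a, ha, b, hb, rfl⟩
  exact mem_biUnion hb ⟨a, ⟨ha, hP⟩, rfl⟩

theorem exists_isOpen_zero_mem_measure_add_lt {G : Type*} [AddZeroClass G] [TopologicalSpace G]
    [ContinuousAdd G] [MeasurableSpace G] {μ : Measure G} [μ.OuterRegular] {P : Set G}
    (hP : IsCompact P) {ε : ENNReal} (hε : μ P < ε) :
    ∃ N : Set G, IsOpen N ∧ 0 ∈ N ∧ μ (N + P) < ε := by
  obtain ⟨W, hPW, W_open, hW⟩ := P.exists_isOpen_lt_of_lt ε hε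
  obtain ⟨N, hN, hNW⟩ := compact_open_separated_add_left hP W_open hPW
  have interior_add_subset : interior N + P ⊆ W :=
    (add_subset_add_right interior_subset).trans hNW
  exact ⟨interior N, isOpen_interior, mem_interior_iff_mem_nhds.2 hN,
    (measure_mono interior_add_subset).trans_lt hW⟩

section NullCompact

variable {G : Type*} [AddGroup G] [TopologicalSpace G] [IsTopologicalAddGroup G]
  [MeasurableSpace G] [BorelSpace G] {μ : Measure G} [μ.IsAddLeftInvariant] {P : Set G}

theorem exists_isOpen_dense_measure_neg_add_le [SeparableSpace G] [μ.OuterRegular]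
    (hP : IsCompact P) (hP_null : μ P = 0) {ε : ENNReal} (hε : ε ≠ 0) :
    ∃ V : Set G, IsOpen V ∧ Dense V ∧ μ (-V + P) ≤ ε := by
  obtain ⟨δ, δ_pos, δ_sum⟩ := ENNReal.exists_pos_sum_of_countable' hε ℕ
  choose N N_open N_zero hN using fun n =>
    exists_isOpen_zero_mem_measure_add_lt hP (hP_null.trans_lt (δ_pos n))
  let q := denseSeq G
  have q_mem (n : ℕ) : q n ∈ (q n - ·) ⁻¹' N n := by simpa using N_zero n
  refine ⟨⋃ n, (q n - ·) ⁻¹' N n, isOpen_iUnion fun n => (N_open n).preimage (by fun_prop),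
    (denseRange_denseSeq G).mono (range_subset_iff.2 fun n => mem_iUnion.2 ⟨n, q_mem n⟩), ?_⟩
  have sub_translates : -(⋃ n, (q n - ·) ⁻¹' N n) + P ⊆ ⋃ n, (q n + ·) ⁻¹' (N n + P) := by
    rintro _ ⟨v, hv, p, hp, rfl⟩
    obtain ⟨n, hn⟩ := mem_iUnion.1 hv
    exact mem_iUnion.2 ⟨n, q n - -v, hn, p, hp, by simp [add_assoc]⟩
  calc
    μ (-(⋃ n, (q n - ·) ⁻¹' N n) + P) ≤ ∑' n, μ ((q n + ·) ⁻¹' (N n + P)) :=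
      (measure_mono sub_translates).trans (measure_iUnion_le _)
    _ = ∑' n, μ (N n + P) := by simp only [measure_preimage_add]
    _ ≤ ∑' n, δ n := ENNReal.tsum_le_tsum fun n => (hN n).le
    _ ≤ ε := δ_sum.le

theorem exists_mem_residual_measure_neg_add_eq_zero [SeparableSpace G] [μ.OuterRegular]
    (hP : IsCompact P) (hP_null : μ P = 0) : ∃ U ∈ residual G, μ (-U + P) = 0 := by
  have inv_ne_zero (n : ℕ) : (n : ENNReal)⁻¹ ≠ 0 := by simp
  choose V V_open V_dense hV using fun n : ℕ =>
    exists_isOpen_dense_measure_neg_add_le hP hP_null (inv_ne_zero n)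
  refine ⟨⋂ n, V n,
    countable_iInter_mem.2 fun n => residual_of_dense_open (V_open n) (V_dense n), ?_⟩
  have le_inv (n : ℕ) : μ (-(⋂ n, V n) + P) ≤ (n : ENNReal)⁻¹ :=
    (measure_mono (add_subset_add_right (neg_subset_neg.2 (iInter_subset V n)))).trans (hV n)
  exact le_zero_iff.1 (ge_of_tendsto' ENNReal.tendsto_inv_nat_nhds_zero le_inv)

theorem countable_inter_add_of_isCompact_null [SeparableSpace G] [T2Space G] [μ.OuterRegular]
    [μ.IsOpenPosMeasure] {L S : Set G} (hL : ∀ M, IsMeagre M → (L ∩ M).Countable)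
    (hS : ∀ N, μ N = 0 → (S ∩ N).Countable) (hP : IsCompact P) (hP_null : μ P = 0) :
    (P ∩ (L + S)).Countable := by
  obtain ⟨U, hU, hUP⟩ := exists_mem_residual_measure_neg_add_eq_zero hP hP_null
  have left_countable : (P ∩ (L ∩ Uᶜ + S)).Countable :=
    countable_inter_add_of_countable_left (hL _ (by rwa [IsMeagre, compl_compl])) fun l _ =>
      hS _ (by rwa [measure_preimage_add])
  have P_meagre : IsMeagre P := isMeagre_of_isClosed_null hP.isClosed hP_null
  have right_countable : (P ∩ (L + S ∩ (-U + P))).Countable :=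
    countable_inter_add_of_countable_right (hS _ hUP) fun s _ =>
      hL _ (P_meagre.preimage_of_isOpenMap (by fun_prop) (isOpenMap_add_right s))
  refine (left_countable.union right_countable).mono ?_
  rintro _ ⟨hlsP, l, hl, s, hs, rfl⟩
  by_cases hlU : l ∈ U
  · have hsUP : s ∈ -U + P := ⟨-l, neg_mem_neg.2 hlU, l + s, hlsP, neg_add_cancel_left l s⟩
    exact .inr ⟨hlsP, add_mem_add hl ⟨hs, hsUP⟩⟩
  · exact .inl ⟨hlsP, add_mem_add ⟨hl, hlU⟩ hs⟩

end NullCompact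

theorem stmt_19_general (L S : Set ℝ) (hL : ∀ M : Set ℝ, IsMeagre M → (L ∩ M).Countable)
    (hS : ∀ N : Set ℝ, volume N = 0 → (S ∩ N).Countable) : ¬ IsBernstein (L + S) := by
  intro hB
  obtain ⟨P, hP, hP_null, hP_unc⟩ := exists_isCompact_null_not_countable
  have h_inter : (P ∩ (L + S)).Countable :=
    countable_inter_add_of_isCompact_null hL hS hP hP_null
  exact hP_unc (hB.countable_of_countable_inter hP.measurableSet h_inter)

theorem stmt_19 (L S : Set ℝ) (hL : IsLuzin L) (hS : IsSierpinski S) :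
    ¬ IsBernstein (L + S) :=
  stmt_19_general L S hL.2 hS.2
end
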